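/- Let c₆ > 0 and suppose that Z(A' ∪ {i})/Z(A') ≥ c₆/√(d(i,A')) for every nonempty A' ⊆ ℤ² with finite complement and every i ∉ A', where d(i,A') = min_{j∈A'} ‖i − j‖₁. Let M ∈ ℕ and let B ⊆ ℤ² be finite and nonempty with connected components B_1, …, B_n, each of ℓ¹-diameter strictly less than M. Then for every A ∈ 𝒟_B with finite complement: Σ_{C ⊆ B} e^{J|C|} Z(A ∪ C)/Z(A) ≥ ∏_{l=1}^{n} (1 + e^{J} c₆/√(2M+1))^{|B_l|}. -/

import Mathlib

open MeasureTheory Real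
open Classical

namespace DeltaPinning

/-- Sites of the lattice `ℤ²`. -/
abbrev Site : Type := ℤ × ℤ

/-- The `ℓ¹`-distance on `ℤ²`. -/
def dist1 (i j : Site) : ℕ := (i.1 - j.1).natAbs + (i.2 - j.2).natAbs

/-- Nearest-neighbour adjacency on `ℤ²`. -/
def adj (i j : Site) : Prop := dist1 i j = 1

/-- The `ℓ^∞`-norm on `ℤ²`. -/
def normInf (i : Site) : ℕ := max i.1.natAbs i.2.natAbs

/-- `ℓ¹`-distance from a site to a set. -/
noncomputable def dInf (i : Site) (A : Set Site) : ℕ := sInf {n | ∃ j ∈ A, dist1 i j = n}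

/-- `x` and `y` are connected by a nearest-neighbour path inside `B`. -/
def connectedIn (B : Set Site) (x y : Site) : Prop :=
  ∃ (n : ℕ) (p : ℕ → Site), p 0 = x ∧ p n = y ∧ (∀ m ≤ n, p m ∈ B) ∧
    ∀ m < n, adj (p m) (p (m + 1))

/-- The connected component of `x` inside `B`. -/
def component (B : Set Site) (x : Site) : Set Site := {y | connectedIn B x y}

/-- `C` is a connected component of `B`. -/
def IsComponent (B C : Set Site) : Prop := ∃ x ∈ B, C = component B x

/-- `B` is a connected set (w.r.t. nearest-neighbour adjacency). -/
def IsConnSet (B : Set Site) : Prop := ∀ x ∈ B, ∀ y ∈ B, connectedIn B x y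

/-- Exterior boundary of a set. -/
def extBd (C : Set Site) : Set Site := {i | i ∉ C ∧ ∃ j ∈ C, adj i j}

/-- `A` is a dry neighbour of `B` : `A ∩ B = ∅` and `A` meets the exterior boundary of
every connected component of `B`. -/
def dryNbr (B A : Set Site) : Prop :=
  A ∩ B = ∅ ∧ ∀ C : Set Site, IsComponent B C → (A ∩ extBd C).Nonempty

/-- `k`-enlargement of a set `D`. -/
def enl (D : Set Site) (k : ℕ) : Set Site := {i | ∃ j ∈ D, dist1 i j ≤ k}

/-- A tuple `κ` is admissible w.r.t. the components `Bc 0, …, Bc (n-1)`. -/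
def admissible {n : ℕ} (Bc : Fin n → Set Site) (κ : Fin n → ℕ) : Prop :=
  ∀ l : Fin n, 0 < (l : ℕ) →
    (κ l = 0 ∨
      enl (Bc l) (κ l) ∩ (⋃ m : Fin n, ⋃ (_ : (m : ℕ) < (l : ℕ)), enl (Bc m) (κ m)) = ∅)

/-- The union `B^{(κ)}` of the enlarged components. -/
def enlUnion {n : ℕ} (Bc : Fin n → Set Site) (κ : Fin n → ℕ) : Set Site :=
  ⋃ l : Fin n, enl (Bc l) (κ l)

/-- The box of radius `l` (in `ℓ^∞`-norm) centered at `x`. -/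
def blk (l : ℕ) (x : Site) : Set Site := {y | normInf (y - x) ≤ l}

/-- The four nearest neighbours of a site. -/
def nbrs (y : Site) : Finset Site :=
  {y + ((1 : ℤ), (0 : ℤ)), y + (-1, 0), y + (0, 1), y + (0, -1)}

/-- `γ` is a nearest-neighbour path of the renormalized lattice `(2l+1)ℤ²` (written in
renormalized coordinates) starting at `0`, leaving the box of radius `l·r` exactly at its
last point; i.e. an element of `Γ^l(r)`. -/
def pathInGamma (l r : ℕ) {k : ℕ} (γ : Fin (k + 1) → Site) : Prop :=
  γ 0 = 0 ∧ (∀ m : Fin k, adj (γ m.castSucc) (γ m.succ)) ∧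
    l * r < normInf ((2 * (l : ℤ) + 1) • γ (Fin.last k)) ∧
    ∀ m : Fin (k + 1), m ≠ Fin.last k → normInf ((2 * (l : ℤ) + 1) • γ m) ≤ l * r

/-- The path `γ` is `(r,ε)`-clean in `A`: strictly fewer than `ε·r` of its vertices `x` are
such that the block `𝐁((2l+1)x, l)` meets `A`. -/
noncomputable def cleanIn (l r : ℕ) (ε : ℝ) {k : ℕ} (γ : Fin (k + 1) → Site)
    (A : Set Site) : Prop :=
  ((((Finset.univ.image γ)).filter
      fun x => (blk l ((2 * (l : ℤ) + 1) • x) ∩ A).Nonempty).card : ℝ) < ε * r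

/-- `A` is `(r,ε)`-clean: some path of `Γ^l(r)` is `(r,ε)`-clean in `A`. -/
def isClean (l r : ℕ) (ε : ℝ) (A : Set Site) : Prop :=
  ∃ (k : ℕ) (γ : Fin (k + 1) → Site), pathInGamma l r γ ∧ cleanIn l r ε γ A

/-- Extension of a configuration on `Aᶜ` by `0` on `A`. -/
noncomputable def extZ (A : Set Site) (η : ↥(Aᶜ) → ℝ) : Site → ℝ :=
  fun i => if h : i ∈ Aᶜ then η ⟨i, h⟩ else 0

/-- Hamiltonian `H_A(φ)`: sum of `V(φ_i - φ_j)` over unordered nearest-neighbour pairs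
`{i,j}` meeting `Aᶜ` (each unordered pair appears as two ordered pairs, whence `1/2`). -/
noncomputable def ham (V : ℝ → ℝ) (A : Set Site) (φ : Site → ℝ) : ℝ :=
  (1 / 2) * ∑ᶠ p : Site × Site,
    if adj p.1 p.2 ∧ (p.1 ∉ A ∨ p.2 ∉ A) then V (φ p.1 - φ p.2) else 0

/-- Partition function `Z(A)` (defined when `Aᶜ` is finite, junk value `0` otherwise). -/
noncomputable def Zpart (V : ℝ → ℝ) (A : Set Site) : ℝ :=
  if h : (Aᶜ : Set Site).Finite then
    letI := h.fintype
    ∫ η : ↥(Aᶜ) → ℝ, Real.exp (- ham V A (extZ A η))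
  else 0

/-- Expectation of `f` (a function of the by-`0`-extended field) under the Gibbs
measure `ℙ_A`. -/
noncomputable def gibbsExp (V : ℝ → ℝ) (A : Set Site) (f : (Site → ℝ) → ℝ) : ℝ :=
  if h : (Aᶜ : Set Site).Finite then
    letI := h.fintype
    (∫ η : ↥(Aᶜ) → ℝ, f (extZ A η) * Real.exp (- ham V A (extZ A η))) / Zpart V A
  else 0

/-- The box `Λ_N = ([-N,N] ∩ ℤ)²`. -/
noncomputable def Lam (N : ℕ) : Finset Site := Finset.Icc (-(N : ℤ)) N ×ˢ Finset.Icc (-(N : ℤ)) N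

/-- `Ā = A ∪ (ℤ² ∖ Λ_N)`. -/
def bar (N : ℕ) (A : Finset Site) : Set Site := ↑A ∪ (↑(Lam N) : Set Site)ᶜ

/-- Unnormalized pinning weight `e^{J|A|} Z(Ā)`. -/
noncomputable def wt (V : ℝ → ℝ) (J : ℝ) (N : ℕ) (A : Finset Site) : ℝ :=
  Real.exp (J * A.card) * Zpart V (bar N A)

/-- Pinning weights `ρ(A)`, `A ⊆ Λ_N`. -/
noncomputable def rho (V : ℝ → ℝ) (J : ℝ) (N : ℕ) (A : Finset Site) : ℝ :=
  wt V J N A / ∑ D ∈ (Lam N).powerset, wt V J N D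

/-- Extension of a configuration on `Λ_N` by `0` outside. -/
noncomputable def extF (N : ℕ) (φ : ↥(Lam N) → ℝ) : Site → ℝ :=
  fun i => if h : i ∈ Lam N then φ ⟨i, h⟩ else 0

/-- The base measure `∏_{i ∈ Λ_N} (dφ_i + e^J δ_0(dφ_i))`. -/
noncomputable def pinnedBase (J : ℝ) (N : ℕ) : Measure (↥(Lam N) → ℝ) :=
  Measure.pi fun _ => (volume : Measure ℝ) + ENNReal.ofReal (Real.exp J) • Measure.dirac 0

/-- The unnormalized δ-pinned measure `e^{-H(φ)} ∏_{i∈Λ_N}(dφ_i + e^J δ_0(dφ_i))`. -/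
noncomputable def pinnedRaw (V : ℝ → ℝ) (J : ℝ) (N : ℕ) : Measure (↥(Lam N) → ℝ) :=
  (pinnedBase J N).withDensity fun φ =>
    ENNReal.ofReal (Real.exp (- ham V ((↑(Lam N) : Set Site)ᶜ) (extF N φ)))

/-- The δ-pinned measure `P̂_N`. -/
noncomputable def pinned (V : ℝ → ℝ) (J : ℝ) (N : ℕ) : Measure (↥(Lam N) → ℝ) :=
  (pinnedRaw V J N Set.univ)⁻¹ • pinnedRaw V J N

/-- Base measure for `ℙ̃_Ā`: Dirac mass at `0` at every coordinate of `A`, Lebesgue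
elsewhere. -/
noncomputable def tildeBase (N : ℕ) (A : Finset Site) : Measure (↥(Lam N) → ℝ) :=
  Measure.pi fun i => if (i : Site) ∈ A then Measure.dirac 0 else (volume : Measure ℝ)

/-- Unnormalized version of `ℙ̃_Ā`. -/
noncomputable def tildeRaw (V : ℝ → ℝ) (N : ℕ) (A : Finset Site) :
    Measure (↥(Lam N) → ℝ) :=
  (tildeBase N A).withDensity fun φ =>
    ENNReal.ofReal (Real.exp (- ham V (bar N A) (extF N φ)))

/-- The measure `ℙ̃_Ā` on `ℝ^{Λ_N}`: the Gibbs measure `ℙ_Ā` with Dirac mass `δ_0`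
placed at every coordinate in `A`. -/
noncomputable def tildeP (V : ℝ → ℝ) (N : ℕ) (A : Finset Site) :
    Measure (↥(Lam N) → ℝ) :=
  (tildeRaw V N A Set.univ)⁻¹ • tildeRaw V N A

/-- The sum `Σ_{C ⊆ B} e^{J|C|} Z(A ∪ C)/Z(A)`. -/
noncomputable def drySum (V : ℝ → ℝ) (J : ℝ) (B : Finset Site) (A : Set Site) : ℝ :=
  ∑ C ∈ B.powerset, Real.exp (J * C.card) * (Zpart V (A ∪ ↑C) / Zpart V A)

/-- `inf_{A ∈ 𝒟_B, |Aᶜ| < ∞} Σ_{C ⊆ B} e^{J|C|} Z(A ∪ C)/Z(A)`. -/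
noncomputable def dryInf (V : ℝ → ℝ) (J : ℝ) (B : Finset Site) : ℝ :=
  sInf (drySum V J B '' {A : Set Site | dryNbr ↑B A ∧ (Aᶜ : Set Site).Finite})

theorem dist1_comm (x y : Site) : dist1 x y = dist1 y x := by
  unfold dist1; omega

theorem dist1_triangle (x y z : Site) : dist1 x z ≤ dist1 x y + dist1 y z := by
  unfold dist1; omega

theorem connectedIn_symm {B : Set Site} {x y : Site} (h : connectedIn B x y) :
    connectedIn B y x := by
  obtain ⟨n, p, h0, hn, hB, ha⟩ := h
  refine ⟨n, fun m => p (n - m), by simpa using hn, by simpa using h0,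
    fun m _ => hB _ (by omega), fun m hm => ?_⟩
  have := ha (n - (m + 1)) (by omega)
  have e : n - (m + 1) + 1 = n - m := by omega
  rw [e] at this
  unfold adj at this ⊢
  rw [dist1_comm]; exact this

theorem connectedIn_trans {B : Set Site} {x y z : Site} (h : connectedIn B x y)
    (h' : connectedIn B y z) : connectedIn B x z := by
  obtain ⟨n, p, h0, hn, hB, ha⟩ := h
  obtain ⟨k, q, h0', hn', hB', ha'⟩ := h'
  refine ⟨n + k, fun m => if m ≤ n then p m else q (m - n), by simpa using h0, ?_, ?_, ?_⟩
  · by_cases hk : k = 0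
    · subst hk
      simp [hn, ← hn', h0']
    · have : ¬ (n + k ≤ n) := by omega
      simp only [this, if_false]
      simpa using hn'
  · intro m hm
    by_cases hmn : m ≤ n
    · simp only [hmn, if_true]; exact hB m hmn
    · simp only [hmn, if_false]; exact hB' _ (by omega)
  · intro m hm
    by_cases h1 : m + 1 ≤ n
    · have h2 : m ≤ n := by omega
      simp only [h1, h2, if_true]; exact ha m (by omega)
    · by_cases h2 : m ≤ n
      · have e : m = n := by omega
        subst e
        have := ha' 0 (by omega)
        rw [h0'] at this
        simp only [h1, h2, if_true, if_false, hn]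
        simpa using this
      · simp only [h1, h2, if_false]
        have := ha' (m - n) (by omega)
        have e : m - n + 1 = m + 1 - n := by omega
        rwa [e] at this

theorem component_self {B : Set Site} {x : Site} (h : x ∈ B) : x ∈ component B x :=
  ⟨0, fun _ => x, rfl, rfl, fun _ _ => h, fun m hm => by omega⟩

theorem component_subset {B : Set Site} {x : Site} : component B x ⊆ B := by
  rintro y ⟨n, p, h0, hn, hB, ha⟩
  rw [← hn]; exact hB n le_rfl

theorem component_eq {B : Set Site} {x y z : Site} (h : z ∈ component B x)
    (h' : z ∈ component B y) : component B x = component B y := by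
  have hxy : connectedIn B x y := connectedIn_trans h (connectedIn_symm h')
  ext w
  exact ⟨fun hw => connectedIn_trans (connectedIn_symm hxy) hw,
    fun hw => connectedIn_trans hxy hw⟩

theorem Zpart_nonneg (V : ℝ → ℝ) (A : Set Site) : 0 ≤ Zpart V A := by
  unfold Zpart
  split_ifs
  · exact integral_nonneg fun _ => (Real.exp_pos _).le
  · exact le_rfl

/-- One-site induction: if adding a site always costs at least `x`, the sum dominates. -/
theorem pow_le_drySum (V : ℝ → ℝ) (J x : ℝ) (hx : 0 < x) (A : Set Site) (hZ : Zpart V A ≠ 0)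
    (S : Finset Site)
    (h : ∀ C ⊆ S, ∀ i ∈ S, i ∉ C → x ≤ Zpart V ((A ∪ ↑C) ∪ {i}) / Zpart V (A ∪ ↑C)) :
    (1 + Real.exp J * x) ^ S.card ≤ drySum V J S A := by
  induction S using Finset.induction_on with
  | empty => simp [drySum, hZ]
  | insert i S hi ih =>
    have ih' := ih fun C hC j hj hjC =>
      h C (hC.trans (Finset.subset_insert _ _)) j (Finset.mem_insert_of_mem hj) hjC
    have key : (1 + Real.exp J * x) * drySum V J S A ≤ drySum V J (insert i S) A := by
      unfold drySum
      rw [Finset.sum_powerset_insert hi, ← Finset.sum_add_distrib, Finset.mul_sum]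
      refine Finset.sum_le_sum fun C hC => ?_
      have hCS := Finset.mem_powerset.1 hC
      have hiC : i ∉ C := fun hh => hi (hCS hh)
      have hr := h C (hCS.trans (Finset.subset_insert _ _)) i (Finset.mem_insert_self _ _) hiC
      have hne : Zpart V (A ∪ ↑C) ≠ 0 := by
        intro h0
        rw [h0, div_zero] at hr
        linarith
      have hpos : 0 < Zpart V (A ∪ ↑C) := lt_of_le_of_ne (Zpart_nonneg _ _) (Ne.symm hne)
      have hApos : 0 < Zpart V A := lt_of_le_of_ne (Zpart_nonneg _ _) (Ne.symm hZ)
      rw [le_div_iff₀ hpos] at hr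
      have hset : A ∪ ((insert i C : Finset Site) : Set Site) = (A ∪ ↑C) ∪ {i} := by
        ext w; simp
      rw [hset, Finset.card_insert_of_notMem hiC]
      push_cast
      have he : Real.exp (J * ((C.card : ℝ) + 1)) = Real.exp (J * C.card) * Real.exp J := by
        rw [← Real.exp_add]; ring_nf
      rw [he]
      have h3 : x * Zpart V (A ∪ ↑C) / Zpart V A ≤ Zpart V ((A ∪ ↑C) ∪ {i}) / Zpart V A :=
        div_le_div_of_nonneg_right hr hApos.le
      have h4 := mul_le_mul_of_nonneg_left h3
        (mul_pos (Real.exp_pos (J * C.card)) (Real.exp_pos J)).le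
      calc _ = Real.exp (J * C.card) * (Zpart V (A ∪ ↑C) / Zpart V A)
            + Real.exp (J * C.card) * Real.exp J * (x * Zpart V (A ∪ ↑C) / Zpart V A) := by ring
        _ ≤ _ := by linarith
    rw [Finset.card_insert_of_notMem hi, pow_succ']
    refine le_trans (mul_le_mul_of_nonneg_left ih' ?_) key
    have := Real.exp_pos J
    positivity

/-- when all components of `B` have diameter `< M`, the sum
`Σ_{C ⊆ B} e^{J|C|} Z(A∪C)/Z(A)` is at least `∏_l (1 + e^J c₆/√(2M+1))^{|B_l|}`. -/
theorem statement11
    (c_V : ℝ) (hcV : 1 ≤ c_V) (V : ℝ → ℝ)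
    (hVsmooth : ContDiff ℝ (⊤ : ℕ∞) V) (hVeven : ∀ t, V (-t) = V t)
    (hVlb : ∀ t, 1 / c_V ≤ iteratedDeriv 2 V t)
    (hVub : ∀ t, iteratedDeriv 2 V t ≤ c_V)
    (J : ℝ) (c₆ : ℝ) (hc₆ : 0 < c₆)
    (hyp : ∀ A' : Set Site, A'.Nonempty → (A'ᶜ : Set Site).Finite →
      ∀ i ∉ A', c₆ / Real.sqrt (dInf i A' : ℝ) ≤ Zpart V (A' ∪ {i}) / Zpart V A')
    (M : ℕ) (B : Finset Site) (hB : B.Nonempty)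
    (n : ℕ) (Bc : Fin n → Set Site)
    (hcomp : ∀ l : Fin n, IsComponent (↑B) (Bc l))
    (hinj : Function.Injective Bc)
    (hsurj : ∀ C : Set Site, IsComponent (↑B) C → ∃ l : Fin n, Bc l = C)
    (hdiam : ∀ l : Fin n, ∀ x ∈ Bc l, ∀ y ∈ Bc l, dist1 x y < M)
    (A : Set Site) (hA : dryNbr (↑B) A) (hAc : (Aᶜ : Set Site).Finite) :
    (∏ l : Fin n, (1 + Real.exp J * c₆ / Real.sqrt (2 * (M : ℝ) + 1)) ^ (Bc l).ncard)
      ≤ drySum V J B A := by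
  have hxpos : 0 < c₆ / Real.sqrt (2 * (M : ℝ) + 1) := by positivity
  have hratio : ∀ C ⊆ B, ∀ i ∈ B, i ∉ C → c₆ / Real.sqrt (2 * (M : ℝ) + 1) ≤
      Zpart V ((A ∪ ↑C) ∪ {i}) / Zpart V (A ∪ ↑C) := by
    intro C hC i hi hiC
    have hiA : i ∉ A := fun hh => by
      have : i ∈ A ∩ (↑B : Set Site) := ⟨hh, hi⟩
      rw [hA.1] at this
      exact this
    have hcmp : IsComponent (↑B) (component (↑B) i) := ⟨i, hi, rfl⟩
    obtain ⟨a, haA, _, j, hj, haj⟩ := hA.2 _ hcmp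
    obtain ⟨l, hl⟩ := hsurj _ hcmp
    have hd := hdiam l i (by rw [hl]; exact component_self hi) j (by rw [hl]; exact hj)
    have hia : dist1 i a ≤ M := by
      have := dist1_triangle i j a
      have e : dist1 j a = 1 := by rw [dist1_comm]; exact haj
      omega
    have hne : {n | ∃ j ∈ A ∪ ↑C, dist1 i j = n}.Nonempty := ⟨_, a, Or.inl haA, rfl⟩
    have hle : dInf i (A ∪ ↑C) ≤ M :=
      (Nat.sInf_le (⟨a, Or.inl haA, rfl⟩ : dist1 i a ∈ {n | ∃ j ∈ A ∪ ↑C, dist1 i j = n})).trans hia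
    have hnot : i ∉ A ∪ (↑C : Set Site) := by
      rintro (h | h)
      · exact hiA h
      · exact hiC h
    have hpos : 0 < dInf i (A ∪ ↑C) := by
      obtain ⟨k, hk, hk'⟩ := Nat.sInf_mem hne
      unfold dInf
      rw [← hk']
      rcases Nat.eq_zero_or_pos (dist1 i k) with h0 | h0
      · exfalso
        apply hnot
        have : i = k := by
          unfold dist1 at h0
          ext <;> omega
        rw [this]; exact hk
      · exact h0
    refine le_trans ?_ (hyp (A ∪ ↑C) ⟨a, Or.inl haA⟩
      (hAc.subset (Set.compl_subset_compl.2 Set.subset_union_left)) i hnot)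
    have hpos' : (0 : ℝ) < dInf i (A ∪ ↑C) := by exact_mod_cast hpos
    have hle' : (dInf i (A ∪ ↑C) : ℝ) ≤ M := by exact_mod_cast hle
    apply div_le_div_of_nonneg_left hc₆.le (Real.sqrt_pos.2 hpos')
    apply Real.sqrt_le_sqrt
    have : (0 : ℝ) ≤ M := Nat.cast_nonneg M
    linarith
  have hZ : Zpart V A ≠ 0 := by
    obtain ⟨i, hi⟩ := hB
    have := hratio ∅ (Finset.empty_subset _) i hi (Finset.notMem_empty _)
    intro h0
    simp only [Finset.coe_empty, Set.union_empty, h0, div_zero] at this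
    linarith
  have main := pow_le_drySum V J _ hxpos A hZ B hratio
  rw [← mul_div_assoc] at main
  refine le_trans ?_ main
  rw [Finset.prod_pow_eq_pow_sum]
  apply pow_le_pow_right₀
  · have : 0 ≤ Real.exp J * c₆ / Real.sqrt (2 * (M : ℝ) + 1) := by positivity
    linarith
  · have hsub : ∀ l, Bc l ⊆ ↑B := fun l => by
      obtain ⟨x, _, hx⟩ := hcomp l
      rw [hx]; exact component_subset
    have hfin : ∀ l, (Bc l).Finite := fun l => B.finite_toSet.subset (hsub l)
    have hcard : ∑ l, (Bc l).ncard = ∑ l, ((hfin l).toFinset).card :=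
      Finset.sum_congr rfl fun l _ => Set.ncard_eq_toFinset_card _ (hfin l)
    rw [hcard, ← Finset.card_biUnion]
    · apply Finset.card_le_card
      intro z hz
      obtain ⟨l, _, hl⟩ := Finset.mem_biUnion.1 hz
      exact hsub l ((hfin l).mem_toFinset.1 hl)
    · intro l _ m _ hlm
      refine Finset.disjoint_left.2 ?_
      intro z hz hz'
      rw [Set.Finite.mem_toFinset] at hz hz'
      apply hlm
      apply hinj
      obtain ⟨x, _, hx⟩ := hcomp l
      obtain ⟨y, _, hy⟩ := hcomp m
      rw [hx] at hz ⊢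
      rw [hy] at hz' ⊢
      exact component_eq hz hz'

end DeltaPinning
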